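/- There do not exist functions φ, ψ : [ω]^ω → [ω]^ω (Borel or otherwise) satisfying: (a) for every centered family F ⊆ [ω]^ω, the image ψ(F) is linearly ordered by ⊆* (any two of its elements are ⊆*-comparable), and (b) for all x, y ∈ [ω]^ω, if x ⊆* ψ(y) then φ(x) ⊆* y. (I.e., there is no Tukey morphism from the pseudo-intersection number 𝔭 to the tower number 𝔱.) -/

import Mathlib

/-- `[ω]^ω`: the infinite subsets of ℕ. -/
abbrev InfSubset := {A : Set ℕ // A.Infinite}

/-- `A ⊆* B`: `A ∖ B` is finite. -/
def SubStar (A B : Set ℕ) : Prop := (A \ B).Finite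

/-- A family of infinite sets is centered iff every nonempty finite subfamily
has infinite intersection. -/
def Centered (F : Set InfSubset) : Prop :=
  ∀ s : Finset InfSubset, ↑s ⊆ F → s.Nonempty → (⋂ A ∈ s, A.1).Infinite

/-!
Put `T = φ ∘ ψ`. Applied to two-element centered families, (a) and (b) give: if `x ∩ y` is
infinite, then `T x ⊆* y` or `T y ⊆* x`. No map `T` has this property: take complementary infinite
sets `a`, `b` and a set `y` that splits each of `a`, `b`, `T a`, `T b`. Since `y` meets `a` and `b`
in infinite sets but almost contains neither `T a` nor `T b`, the infinite set `T y` would be almost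
contained in both `a` and `b`.
-/

open Filter Function Set

theorem SubStar.not_subStar_compl {A C : Set ℕ} (hC : C.Infinite) (h : SubStar C A) :
    ¬ SubStar C Aᶜ := fun h' ↦
  hC <| by simpa only [sdiff_compl, sdiff_union_inter] using Finite.union h h'

theorem centered_of_infinite_biInter {F : Set InfSubset} (hF : (⋂ A ∈ F, A.1).Infinite) :
    Centered F := fun _ hs _ ↦
  hF.mono (biInter_subset_biInter_left hs)

/-- `S` splits `A`: both `A ∩ S` and `A ∖ S` are infinite. This is the relation behind the splitting
number `𝔰`; the second condition unfolds to `¬ SubStar A S`. -/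
def Splits (S A : Set ℕ) : Prop := (A ∩ S).Infinite ∧ (A \ S).Infinite

theorem exists_injective_forall_mem {κ : Type*} [Countable κ] (A : κ → InfSubset) :
    ∃ f : κ → ℕ, Injective f ∧ ∀ k, f k ∈ (A k).1 := by
  obtain ⟨e, he⟩ := exists_injective_nat κ
  let B : ℕ → InfSubset := extend e A fun _ ↦ ⟨univ, infinite_univ⟩
  obtain ⟨g, hg, hgB⟩ := extraction_forall_of_frequently fun n ↦
    Nat.frequently_atTop_iff_infinite.2 (B n).2
  refine ⟨g ∘ e, hg.injective.comp he, fun k ↦ ?_⟩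
  have hB : B (e k) = A k := he.extend_apply ..
  exact hB ▸ hgB (e k)

theorem exists_forall_splits {ι : Type*} [Countable ι] (A : ι → InfSubset) :
    ∃ S, ∀ i, Splits S (A i).1 := by
  obtain ⟨f, hf, hfA⟩ := exists_injective_forall_mem fun k : ι × Bool × ℕ ↦ A k.1
  have inj (i : ι) (b : Bool) : Injective fun n ↦ f (i, b, n) := fun m n h ↦ by
    simpa using hf h
  refine ⟨f '' {k | k.2.1 = true}, fun i ↦ ⟨?_, ?_⟩⟩
  · exact infinite_of_injective_forall_mem (inj i true) fun n ↦
      ⟨hfA (i, true, n), mem_image_of_mem f rfl⟩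
  · exact infinite_of_injective_forall_mem (inj i false) fun n ↦
      ⟨hfA (i, false, n), by simp [hf.mem_set_image]⟩

theorem exists_infinite_infinite_compl : ∃ A : Set ℕ, A.Infinite ∧ Aᶜ.Infinite := by
  obtain ⟨A, hA⟩ := exists_forall_splits fun _ : Unit ↦ ⟨univ, infinite_univ⟩
  exact ⟨A, by simpa [Splits, compl_eq_univ_sdiff] using hA ()⟩

theorem exists_inter_infinite_not_subStar (T : InfSubset → InfSubset) :
    ∃ x y : InfSubset, (x.1 ∩ y.1).Infinite ∧ ¬ SubStar (T x).1 y.1 ∧ ¬ SubStar (T y).1 x.1 := by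
  obtain ⟨A, hA, hAc⟩ := exists_infinite_infinite_compl
  let a : InfSubset := ⟨A, hA⟩
  let b : InfSubset := ⟨Aᶜ, hAc⟩
  obtain ⟨S, hS⟩ := exists_forall_splits ![a, b, T a, T b]
  let y : InfSubset := ⟨S, (hS 0).1.mono inter_subset_right⟩
  by_cases hy : SubStar (T y).1 A
  · exact ⟨b, y, (hS 1).1, (hS 3).2, hy.not_subStar_compl (T y).2⟩
  · exact ⟨a, y, (hS 0).1, (hS 2).2, hy⟩

/-- There are no maps `φ, ψ : [ω]^ω → [ω]^ω` such that (a) the image under `ψ`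
of every centered family is linearly ordered by `⊆*`, and (b) `x ⊆* ψ(y)`
implies `φ(x) ⊆* y`.  (No Tukey morphism from 𝔭 to 𝔱.) -/
theorem stmt5 :
    ¬ ∃ (φ ψ : InfSubset → InfSubset),
      (∀ F : Set InfSubset, Centered F →
        ∀ x ∈ F, ∀ y ∈ F, SubStar (ψ x).1 (ψ y).1 ∨ SubStar (ψ y).1 (ψ x).1) ∧
      (∀ x y : InfSubset, SubStar x.1 (ψ y).1 → SubStar (φ x).1 y.1) := by
  rintro ⟨φ, ψ, hψ, hφψ⟩
  obtain ⟨x, y, hxy, hx, hy⟩ := exists_inter_infinite_not_subStar (φ ∘ ψ)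
  have hcentered : Centered {x, y} := centered_of_infinite_biInter (by rwa [biInter_pair])
  rcases hψ _ hcentered x (mem_insert x {y}) y (mem_insert_of_mem x rfl) with h | h
  · exact hx (hφψ (ψ x) y h)
  · exact hy (hφψ (ψ y) x h)
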